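/- Let J ⊂ ℂ[p_J] be the ideal generated by the ten binomials p_4p_{123}−p_3p_{124}, p_{24}p_{134}−p_{14}p_{234}, p_{23}p_{134}−p_{13}p_{234}, p_2p_{14}−p_1p_{24}, p_2p_{13}−p_1p_{23}, p_{24}p_{123}−p_{23}p_{124}, p_{14}p_{123}−p_{13}p_{124}, p_4p_{23}−p_3p_{24}, p_4p_{13}−p_3p_{14}, p_{14}p_{23}−p_{13}p_{24}. Then: (1) there exists w ∈ ℝ^14 such that init_w(I_4) = J; (2) J is not a prime ideal; and (3) the ideal J + ⟨p_2p_{134}−p_1p_{234}⟩ is a prime ideal. -/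

import Mathlib

open MvPolynomial

/-- The weight of a monomial exponent `u` with respect to a weight vector `w`. -/
noncomputable def wt {N : ℕ} (w : Fin N → ℝ) (u : Fin N →₀ ℕ) : ℝ :=
  ∑ i, w i * (u i : ℝ)

open Classical in
/-- The initial form of a polynomial `f` with respect to a weight vector `w`:
the sum of the terms whose weight is minimal among the terms of `f`. -/
noncomputable def initialForm {N : ℕ} (w : Fin N → ℝ) (f : MvPolynomial (Fin N) ℂ) :
    MvPolynomial (Fin N) ℂ :=
  ∑ u ∈ f.support, if ∀ v ∈ f.support, wt w u ≤ wt w v then monomial u (coeff u f) else 0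

/-- The initial ideal of `I` with respect to a weight vector `w`. -/
noncomputable def initialIdeal {N : ℕ} (w : Fin N → ℝ) (I : Ideal (MvPolynomial (Fin N) ℂ)) :
    Ideal (MvPolynomial (Fin N) ℂ) :=
  Ideal.span {g | ∃ f ∈ I, f ≠ 0 ∧ g = initialForm w f}

/-- An ideal is binomial if it is generated by polynomials with at most two terms. -/
def IsBinomialIdeal {N : ℕ} (I : Ideal (MvPolynomial (Fin N) ℂ)) : Prop :=
  ∃ S : Set (MvPolynomial (Fin N) ℂ), I = Ideal.span S ∧ ∀ f ∈ S, f.support.card ≤ 2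

/-- The Plücker minor: the determinant of the submatrix of the `r × c` matrix of
indeterminates `(x_{i,j})` with row indices `1, …, |J|` and column indices the elements
of `J` in increasing order. -/
noncomputable def pluckerMinor (r c : ℕ) (J : Finset (Fin c)) (h : J.card ≤ r) :
    MvPolynomial (Fin r × Fin c) ℂ :=
  (Matrix.of fun a b : Fin J.card =>
    MvPolynomial.X (Fin.castLE h a, ((J.orderIsoOfFin rfl b : Fin c)))).det

/-- The 14 nonempty proper subsets of `{1,2,3,4}` in the order
`p₁,p₂,p₃,p₄,p₁₂,p₁₃,p₁₄,p₂₃,p₂₄,p₃₄,p₁₂₃,p₁₂₄,p₁₃₄,p₂₃₄`. -/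
def subsets4 : Fin 14 → Finset (Fin 4) :=
  ![{0}, {1}, {2}, {3}, {0, 1}, {0, 2}, {0, 3}, {1, 2}, {1, 3}, {2, 3},
    {0, 1, 2}, {0, 1, 3}, {0, 2, 3}, {1, 2, 3}]

lemma subsets4_card : ∀ i : Fin 14, (subsets4 i).card ≤ 3 := by decide

/-- The map `φ₄` sending each Plücker variable `p_J` to the corresponding minor of the
`3 × 4` matrix of indeterminates. -/
noncomputable def phi4 : MvPolynomial (Fin 14) ℂ →ₐ[ℂ] MvPolynomial (Fin 3 × Fin 4) ℂ :=
  MvPolynomial.aeval fun i => pluckerMinor 3 4 (subsets4 i) (subsets4_card i)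

/-- The defining ideal `I₄` of the flag variety `Flag₄` in its Plücker embedding. -/
noncomputable def I4 : Ideal (MvPolynomial (Fin 14) ℂ) := RingHom.ker phi4.toRingHom

/-- Variable indices: `0 ↦ p₁, 1 ↦ p₂, 2 ↦ p₃, 3 ↦ p₄, 4 ↦ p₁₂, 5 ↦ p₁₃, 6 ↦ p₁₄,
7 ↦ p₂₃, 8 ↦ p₂₄, 9 ↦ p₃₄, 10 ↦ p₁₂₃, 11 ↦ p₁₂₄, 12 ↦ p₁₃₄, 13 ↦ p₂₃₄`.
The non-prime initial ideal of a maximal cone of `trop(Flag₄)`. -/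
noncomputable def nonPrimeInitial : Ideal (MvPolynomial (Fin 14) ℂ) :=
  Ideal.span {X 3 * X 10 - X 2 * X 11, X 8 * X 12 - X 6 * X 13, X 7 * X 12 - X 5 * X 13,
    X 1 * X 6 - X 0 * X 8, X 1 * X 5 - X 0 * X 7, X 8 * X 10 - X 7 * X 11,
    X 6 * X 10 - X 5 * X 11, X 3 * X 7 - X 2 * X 8, X 3 * X 5 - X 2 * X 6,
    X 6 * X 7 - X 5 * X 8}

/-!
Write `J = nonPrimeInitial` and `q = p₂p₁₃₄ − p₁p₂₃₄`. The binomials of `J + ⟨q⟩` are the `2 × 2`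
minors of a partially filled grid of variables, so `J + ⟨q⟩` is a toric prime, and so is
`K = ⟨p₁₃, p₁₄, p₂₃, p₂₄, p₄p₁₂₃ − p₃p₁₂₄⟩ ⊇ J`. As `q K ⊆ J` and `q ∉ K`, we get
`J = (J + ⟨q⟩) ∩ K`, and `J` is not prime because `q p₁₃ ∈ J`.

For the weight `w = coneWeight`, the generators of `J` are initial forms of Plücker relations, so
`J ⊆ init_w I₄`. Conversely, let `x(t)` be a family of flags whose rescaled Plücker coordinates
`t ^ (-w) p(x(t))` have a limit as `t → 0`; then the initial forms of the elements of `I₄` vanish at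
this limit. Two explicit families have limits that are dense in `V(J + ⟨q⟩)` and in `V(K)`, which
gives `init_w I₄ ⊆ (J + ⟨q⟩) ∩ K = J`.
-/

/-! ### Ideals of partially filled grids -/

section MonomialMaps

variable {σ τ R : Type*}

lemma mem_of_map_monomial [CommRing R] {φ : MvPolynomial σ R →ₗ[R] MvPolynomial τ R}
    {e : (σ →₀ ℕ) → τ →₀ ℕ} (hφ : ∀ u, φ (monomial u 1) = monomial (e u) 1)
    {N : Submodule R (MvPolynomial σ R)}
    (hN : ∀ u v, e u = e v → monomial u 1 - monomial v 1 ∈ N)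
    {f : MvPolynomial σ R} (hf : φ f = 0) : f ∈ N := by
  let L : MvPolynomial τ R →ₗ[R] MvPolynomial σ R ⧸ N :=
    (basisMonomials τ R).constr R fun d => N.mkQ (monomial (Function.invFun e d) 1)
  have hL (d) : L (monomial d 1) = N.mkQ (monomial (Function.invFun e d) 1) := by
    simpa only [coe_basisMonomials] using (basisMonomials τ R).constr_basis R _ d
  have hcomp : L ∘ₗ φ = N.mkQ := by
    refine (basisMonomials σ R).ext fun u => ?_
    rw [coe_basisMonomials, LinearMap.comp_apply, hφ, hL, ← sub_eq_zero, ← map_sub]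
    exact (Submodule.Quotient.mk_eq_zero N).2 (hN _ _ (Function.invFun_eq ⟨u, rfl⟩))
  rw [← N.ker_mkQ, ← hcomp, LinearMap.mem_ker, LinearMap.comp_apply, hf, map_zero]

lemma monomial_one_eq_prod_toMultiset [CommSemiring R] (u : σ →₀ ℕ) :
    (monomial u 1 : MvPolynomial σ R) = (u.toMultiset.map X).prod := by
  rw [Finsupp.toMultiset_map, Finsupp.prod_toMultiset,
    Finsupp.prod_mapDomain_index (by simp) (by simp [pow_add]), monic_monomial_eq]

lemma aeval_mul_monomial {S : Type*} [CommSemiring R] [CommSemiring S] [Algebra R S]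
    (x y : σ → S) (u : σ →₀ ℕ) :
    aeval (fun i => x i * y i) (monomial u (1 : R)) =
      aeval x (monomial u (1 : R)) * aeval y (monomial u (1 : R)) := by
  simp only [aeval_monomial, map_one, one_mul, mul_pow, Finsupp.prod_mul]

end MonomialMaps

section GridIdeal

variable {σ α β : Type*} (row : σ → α) (col : σ → β)

/-- The columns occupied by row `a` when the variable `i` sits in the cell `(row i, col i)` of a
partially filled grid. -/
def rowSupport (a : α) : Set β := {b | ∃ i, row i = a ∧ col i = b}

/-- Two rows of the grid that share an occupied column have nested sets of occupied columns. -/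
def NestedRows : Prop :=
  ∀ j k, col j = col k →
    rowSupport row col (row j) ⊆ rowSupport row col (row k) ∨
      rowSupport row col (row k) ⊆ rowSupport row col (row j)

variable (R : Type*) [CommRing R]

/-- The ideal of `2 × 2` minors of a partially filled grid of variables: in each generator, the
cells of `i`, `k`, `j`, `l` are the consecutive vertices of a rectangle. -/
noncomputable def gridIdeal : Ideal (MvPolynomial σ R) :=
  Ideal.span {g | ∃ i j k l, row i = row k ∧ row j = row l ∧ col i = col l ∧ col j = col k ∧
    g = X i * X j - X k * X l}

/-- The toric parametrization of matrices of rank at most one, `Xᵢ ↦ rₐ c_b` for the cell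
`(a, b)` of `i`. -/
noncomputable def gridMap : MvPolynomial σ R →ₐ[R] MvPolynomial (α ⊕ β) R :=
  aeval fun i => X (Sum.inl (row i)) * X (Sum.inr (col i))

variable {row col R}

lemma X_mul_X_sub_mem_gridIdeal {i j k l : σ} (hik : row i = row k) (hjl : row j = row l)
    (hil : col i = col l) (hjk : col j = col k) :
    X i * X j - X k * X l ∈ gridIdeal row col R :=
  Ideal.subset_span ⟨i, j, k, l, hik, hjl, hil, hjk, rfl⟩

lemma gridIdeal_le_of_lt [LinearOrder α] [LinearOrder β]
    (hinj : Function.Injective fun i => (row i, col i)) {I : Ideal (MvPolynomial σ R)}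
    (hI : ∀ i j k l, row i = row k → row j = row l → col i = col l → col j = col k →
      row i < row j → col i < col j → X i * X j - X k * X l ∈ I) :
    gridIdeal row col R ≤ I := by
  refine Ideal.span_le.2 ?_
  rintro _ ⟨i, j, k, l, hik, hjl, hil, hjk, rfl⟩
  rw [SetLike.mem_coe]
  wlog hrow : row i ≤ row j generalizing i j k l
  · simpa only [mul_comm] using this j i l k hjl hik hjk hil (le_of_not_ge hrow)
  wlog hcol : col i ≤ col j generalizing i j k l
  · have hneg := this k l i j hik.symm hjl.symm hjk.symm hil.symm (by rwa [← hik, ← hjl])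
      (by rw [← hjk, ← hil]; exact le_of_not_ge hcol)
    rw [← neg_mem_iff, neg_sub]
    exact hneg
  have heq {p q : σ} (hr : row p = row q) (hc : col p = col q) : p = q :=
    hinj (Prod.ext hr hc)
  rcases hrow.eq_or_lt with hr | hr
  · rw [heq (hr.trans hjl) hil, heq (hr.symm.trans hik) hjk, mul_comm, sub_self]
    exact I.zero_mem
  rcases hcol.eq_or_lt with hc | hc
  · rw [heq hik (hc.trans hjk), heq hjl (hc.symm.trans hil), sub_self]
    exact I.zero_mem
  exact hI i j k l hik hjl hil hjk hr hc

lemma gridIdeal_le_ker_gridMap : gridIdeal row col R ≤ RingHom.ker (gridMap row col R) := by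
  refine Ideal.span_le.2 ?_
  rintro _ ⟨i, j, k, l, hik, hjl, hil, hjk, rfl⟩
  rw [SetLike.mem_coe, RingHom.mem_ker]
  simp only [gridMap, map_sub, map_mul, aeval_X, hik, hjl, hil, hjk]
  ring

lemma exists_swap_cons (hinj : Function.Injective fun i => (row i, col i))
    (hnest : NestedRows row col) {s t : Multiset σ} (ht : t ≠ 0)
    (hrow : s.map row = t.map row) (hcol : s.map col = t.map col) :
    ∃ k ∈ t, ∃ s', (k ::ₘ s').map row = s.map row ∧ (k ::ₘ s').map col = s.map col ∧
      (s.map X).prod - ((k ::ₘ s').map X).prod ∈ gridIdeal row col R := by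
  obtain ⟨k, hkt, hmin⟩ := t.finite_toSet.exists_minimalFor (fun i => rowSupport row col (row i)) _
    (Multiset.exists_mem_of_ne_zero ht)
  obtain ⟨i, his, hik⟩ : ∃ i ∈ s, row i = row k :=
    Multiset.mem_map.1 (hrow ▸ Multiset.mem_map_of_mem row hkt)
  obtain ⟨j, hjs, hjk⟩ : ∃ j ∈ s, col j = col k :=
    Multiset.mem_map.1 (hcol ▸ Multiset.mem_map_of_mem col hkt)
  obtain ⟨m, hmt, hmj⟩ : ∃ m ∈ t, row m = row j :=
    Multiset.mem_map.1 (hrow ▸ Multiset.mem_map_of_mem row hjs)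
  have hsub : rowSupport row col (row k) ⊆ rowSupport row col (row j) :=
    (hnest j k hjk).elim (fun h => by simpa only [hmj] using hmin hmt (by simpa only [hmj])) id
  obtain ⟨l, hlj, hli⟩ : col i ∈ rowSupport row col (row j) := hsub ⟨i, hik, rfl⟩
  obtain ⟨s', rfl⟩ := Multiset.exists_cons_of_mem his
  rcases Multiset.mem_cons.1 hjs with rfl | hjs'
  · obtain rfl : j = k := hinj (Prod.ext hik hjk)
    exact ⟨j, hkt, s', rfl, rfl, by simp⟩
  · obtain ⟨s'', rfl⟩ := Multiset.exists_cons_of_mem hjs'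
    refine ⟨k, hkt, l ::ₘ s'', by simp [hik, hlj], ?_, ?_⟩
    · simp only [Multiset.map_cons, hjk, hli]
      exact Multiset.cons_swap _ _ _
    · have hswap : X i * X j - X k * X l ∈ gridIdeal row col R :=
        X_mul_X_sub_mem_gridIdeal hik hlj.symm hli.symm hjk
      convert Ideal.mul_mem_right (s''.map X).prod _ hswap using 1
      simp only [Multiset.map_cons, Multiset.prod_cons]
      ring

lemma prod_X_sub_prod_X_mem_gridIdeal (hinj : Function.Injective fun i => (row i, col i))
    (hnest : NestedRows row col) {s t : Multiset σ}
    (hrow : s.map row = t.map row) (hcol : s.map col = t.map col) :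
    (s.map X).prod - (t.map X).prod ∈ gridIdeal row col R := by
  induction hn : t.card generalizing s t with
  | zero =>
    obtain rfl := Multiset.card_eq_zero.1 hn
    obtain rfl : s = 0 := by simpa using hrow
    simp
  | succ n ih =>
    have ht : t ≠ 0 := by rintro rfl; simp at hn
    obtain ⟨k, hkt, s', hrow', hcol', hs'⟩ := exists_swap_cons (R := R) hinj hnest ht hrow hcol
    obtain ⟨t', rfl⟩ := Multiset.exists_cons_of_mem hkt
    have hrest : (s'.map X).prod - (t'.map X).prod ∈ gridIdeal row col R :=
      ih (by simpa using hrow'.trans hrow) (by simpa using hcol'.trans hcol) (by simpa using hn)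
    convert Ideal.add_mem _ hs' (Ideal.mul_mem_left _ (X k) hrest) using 1
    simp only [Multiset.map_cons, Multiset.prod_cons]
    ring

lemma gridMap_monomial (u : σ →₀ ℕ) :
    gridMap row col R (monomial u 1) =
      monomial (u.mapDomain (Sum.inl ∘ row) + u.mapDomain (Sum.inr ∘ col)) 1 := by
  rw [gridMap, aeval_mul_monomial, ← one_mul (1 : R), ← monomial_mul, one_mul,
    ← rename_monomial, ← rename_monomial, rename_eq_aeval, rename_eq_aeval]
  rfl

lemma mapDomain_eq_of_mapDomain_inl_add_inr_eq {u v : σ →₀ ℕ}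
    (h : u.mapDomain (Sum.inl ∘ row) + u.mapDomain (Sum.inr ∘ col) =
      v.mapDomain (Sum.inl ∘ row) + v.mapDomain (Sum.inr ∘ col)) :
    u.mapDomain row = v.mapDomain row ∧ u.mapDomain col = v.mapDomain col := by
  simp only [Finsupp.mapDomain_comp] at h
  constructor
  · ext a
    simpa [Finsupp.mapDomain_apply Sum.inl_injective, Finsupp.mapDomain_of_notMem_range] using
      DFunLike.congr_fun h (Sum.inl a)
  · ext b
    simpa [Finsupp.mapDomain_apply Sum.inr_injective, Finsupp.mapDomain_of_notMem_range] using
      DFunLike.congr_fun h (Sum.inr b)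

theorem ker_gridMap_eq_gridIdeal (hinj : Function.Injective fun i => (row i, col i))
    (hnest : NestedRows row col) : RingHom.ker (gridMap row col R) = gridIdeal row col R := by
  refine le_antisymm (fun f hf => ?_) gridIdeal_le_ker_gridMap
  refine mem_of_map_monomial (φ := (gridMap row col R).toLinearMap)
    (N := (gridIdeal row col R).restrictScalars R) gridMap_monomial (fun u v huv => ?_) hf
  obtain ⟨hrow, hcol⟩ := mapDomain_eq_of_mapDomain_inl_add_inr_eq huv
  rw [Submodule.restrictScalars_mem, monomial_one_eq_prod_toMultiset,
    monomial_one_eq_prod_toMultiset]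
  exact prod_X_sub_prod_X_mem_gridIdeal hinj hnest (by simp only [Finsupp.toMultiset_map, hrow])
    (by simp only [Finsupp.toMultiset_map, hcol])

theorem gridIdeal_isPrime [IsDomain R] (hinj : Function.Injective fun i => (row i, col i))
    (hnest : NestedRows row col) : (gridIdeal row col R).IsPrime :=
  ker_gridMap_eq_gridIdeal (R := R) hinj hnest ▸ RingHom.ker_isPrime _

lemma eval_gridMap (x : α ⊕ β → R) (f : MvPolynomial σ R) :
    eval x (gridMap row col R f) =
      eval (fun i => x (Sum.inl (row i)) * x (Sum.inr (col i))) f := by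
  simp only [← aeval_eq_eval]
  rw [gridMap, ← AlgHom.comp_apply, comp_aeval]
  simp

lemma mem_gridIdeal_of_forall_eval_eq_zero [IsDomain R] [Infinite R]
    (hinj : Function.Injective fun i => (row i, col i)) (hnest : NestedRows row col)
    {f : MvPolynomial σ R}
    (hf : ∀ (r : α → R) (c : β → R), (∀ a, r a ≠ 0) → (∀ b, c b ≠ 0) →
      eval (fun i => r (row i) * c (col i)) f = 0) :
    f ∈ gridIdeal row col R := by
  rw [← ker_gridMap_eq_gridIdeal hinj hnest, RingHom.mem_ker]
  have htorus : ∀ x ∈ Set.pi Set.univ (fun _ : α ⊕ β => ({0}ᶜ : Set R)),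
      eval x (gridMap row col R f) = eval x 0 := by
    intro x hx
    have hx0 (p) : x p ≠ 0 := hx p trivial
    rw [eval_gridMap, map_zero]
    exact hf (fun a => x (Sum.inl a)) (fun b => x (Sum.inr b)) (fun a => hx0 _) fun b => hx0 _
  exact funext_set _ (fun _ => (Set.finite_singleton 0).infinite_compl) htorus

end GridIdeal

/-! ### The two components of `nonPrimeInitial` -/

lemma sub_aeval_mem {σ R : Type*} [CommRing R] {I : Ideal (MvPolynomial σ R)}
    {y : σ → MvPolynomial σ R} (hy : ∀ i, X i - y i ∈ I) (f : MvPolynomial σ R) :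
    f - aeval y f ∈ I := by
  have hcomp : (Ideal.Quotient.mkₐ R I).comp (aeval y) = Ideal.Quotient.mkₐ R I := by
    refine algHom_ext fun i => ?_
    rw [AlgHom.comp_apply, aeval_X]
    exact (Ideal.Quotient.eq.2 (hy i)).symm
  exact Ideal.Quotient.eq.1 (DFunLike.congr_fun hcomp f).symm

/-- The row of each Plücker variable in the grid
```
         p₁₃₄  p₂₃₄
   p₄    p₁₄   p₂₄   p₁₂₄
   p₃    p₁₃   p₂₃   p₁₂₃
         p₁    p₂
```
to which `p₁₂` and `p₃₄` are added in two further rows of their own. -/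
def crossRow : Fin 14 → Fin 6 := ![3, 3, 2, 1, 4, 2, 1, 2, 1, 5, 2, 1, 0, 0]

/-- The column of each Plücker variable in the grid of `crossRow`. -/
def crossCol : Fin 14 → Fin 4 := ![1, 2, 0, 0, 0, 1, 1, 2, 2, 0, 3, 3, 1, 2]

/-- The row of each Plücker variable in the grid whose only rectangle has the rows `p₄ p₃` and
`p₁₂₄ p₁₂₃`. -/
def pairRow : Fin 14 → Fin 14 := ![0, 1, 2, 2, 4, 5, 6, 7, 8, 9, 10, 10, 12, 13]

/-- The column of each Plücker variable in the grid of `pairRow`. -/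
def pairCol : Fin 14 → Fin 2 := ![0, 0, 1, 0, 0, 0, 0, 0, 0, 0, 1, 0, 0, 0]

lemma crossGrid_injective : Function.Injective fun i => (crossRow i, crossCol i) := by decide

lemma crossGrid_nestedRows : NestedRows crossRow crossCol := by
  unfold NestedRows rowSupport
  simp only [Set.ofPred_subset_ofPred]
  decide +kernel

lemma pairGrid_injective : Function.Injective fun i => (pairRow i, pairCol i) := by decide

lemma pairGrid_nestedRows : NestedRows pairRow pairCol := by
  unfold NestedRows rowSupport
  simp only [Set.ofPred_subset_ofPred]
  decide +kernel

/-- The rectangles of the grid of `crossRow`, each given by the cells `i`, `j` on its descending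
diagonal followed by the cells `k`, `l` in the rows of `i`, `j`. -/
def crossRectangles : List (Fin 14 × Fin 14 × Fin 14 × Fin 14) :=
  [(3, 5, 6, 2), (3, 7, 8, 2), (3, 10, 11, 2), (5, 1, 7, 0), (6, 1, 8, 0), (6, 7, 8, 5),
    (6, 10, 11, 5), (8, 10, 11, 7), (12, 1, 13, 0), (12, 7, 13, 5), (12, 8, 13, 6)]

lemma mem_crossRectangles : ∀ i k, crossRow i = crossRow k → ∀ j, crossCol j = crossCol k →
    crossRow i < crossRow j → crossCol i < crossCol j → ∀ l, crossRow j = crossRow l →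
    crossCol i = crossCol l → (i, j, k, l) ∈ crossRectangles := by
  decide +kernel

lemma sup_span_singleton_eq_gridIdeal :
    nonPrimeInitial ⊔ Ideal.span {X 1 * X 12 - X 0 * X 13} = gridIdeal crossRow crossCol ℂ := by
  refine le_antisymm (sup_le ?_ ?_) (gridIdeal_le_of_lt crossGrid_injective ?_)
  · rw [nonPrimeInitial, Ideal.span_le]
    rintro g (rfl | rfl | rfl | rfl | rfl | rfl | rfl | rfl | rfl | rfl) <;>
    · rw [SetLike.mem_coe, ← ker_gridMap_eq_gridIdeal crossGrid_injective crossGrid_nestedRows,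
        RingHom.mem_ker]
      simp [gridMap, crossRow, crossCol]
      ring
  · rw [Ideal.span_singleton_le_iff_mem]
    exact X_mul_X_sub_mem_gridIdeal rfl rfl rfl rfl
  · intro i j k l hik hjl hil hjk hrow hcol
    have hcells := mem_crossRectangles i k hik j hjk hrow hcol l hjl hil
    rw [nonPrimeInitial, ← Ideal.span_union]
    simp only [crossRectangles, List.mem_cons, Prod.mk.injEq, List.not_mem_nil, or_false] at hcells
    apply Ideal.subset_span
    rcases hcells with ⟨rfl, rfl, rfl, rfl⟩ | ⟨rfl, rfl, rfl, rfl⟩ | ⟨rfl, rfl, rfl, rfl⟩ |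
      ⟨rfl, rfl, rfl, rfl⟩ | ⟨rfl, rfl, rfl, rfl⟩ | ⟨rfl, rfl, rfl, rfl⟩ | ⟨rfl, rfl, rfl, rfl⟩ |
      ⟨rfl, rfl, rfl, rfl⟩ | ⟨rfl, rfl, rfl, rfl⟩ | ⟨rfl, rfl, rfl, rfl⟩ | ⟨rfl, rfl, rfl, rfl⟩ <;>
    simp [mul_comm]

/-- The prime `⟨p₁₃, p₁₄, p₂₃, p₂₄, p₄p₁₂₃ − p₃p₁₂₄⟩`, the second component of
`nonPrimeInitial`. -/
noncomputable def extraComponent : Ideal (MvPolynomial (Fin 14) ℂ) :=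
  Ideal.span {X 5, X 6, X 7, X 8, X 3 * X 10 - X 2 * X 11}

/-- The substitution `p₁₃, p₁₄, p₂₃, p₂₄ ↦ 0`. -/
noncomputable def dropMixed : MvPolynomial (Fin 14) ℂ →ₐ[ℂ] MvPolynomial (Fin 14) ℂ :=
  aeval fun i => if 5 ≤ i ∧ i ≤ 8 then 0 else X i

lemma X_sub_dropMixed_X_mem (i : Fin 14) :
    X i - (if 5 ≤ i ∧ i ≤ 8 then 0 else X i) ∈ extraComponent := by
  split_ifs with hi
  · have hi' : i = 5 ∨ i = 6 ∨ i = 7 ∨ i = 8 := by lia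
    rw [sub_zero]
    apply Ideal.subset_span
    rcases hi' with rfl | rfl | rfl | rfl <;> simp
  · simp

lemma pairGrid_rectangle : ∀ i k, pairRow i = pairRow k → ∀ j, pairCol j = pairCol k →
    pairRow i < pairRow j → pairCol i < pairCol j → ∀ l, pairRow j = pairRow l →
    pairCol i = pairCol l → (i, j, k, l) = (3, 10, 2, 11) := by
  decide +kernel

lemma gridIdeal_pair_le_extraComponent : gridIdeal pairRow pairCol ℂ ≤ extraComponent := by
  refine gridIdeal_le_of_lt pairGrid_injective fun i j k l hik hjl hil hjk hrow hcol => ?_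
  cases pairGrid_rectangle i k hik j hjk hrow hcol l hjl hil
  exact Ideal.subset_span (by simp)

lemma X_three_mul_sub_mem_gridIdeal_pair :
    X 3 * X 10 - X 2 * X 11 ∈ gridIdeal pairRow pairCol ℂ :=
  X_mul_X_sub_mem_gridIdeal rfl rfl rfl rfl

lemma extraComponent_eq_comap :
    extraComponent = (gridIdeal pairRow pairCol ℂ).comap dropMixed := by
  refine le_antisymm ?_ fun f hf => ?_
  · rw [extraComponent, Ideal.span_le]
    rintro g (rfl | rfl | rfl | rfl | rfl) <;>
    simp [dropMixed, X_three_mul_sub_mem_gridIdeal_pair]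
  · rw [← sub_add_cancel f (dropMixed f)]
    exact Ideal.add_mem _ (sub_aeval_mem X_sub_dropMixed_X_mem f)
      (gridIdeal_pair_le_extraComponent hf)

lemma extraComponent_isPrime : extraComponent.IsPrime := by
  have := gridIdeal_isPrime (R := ℂ) pairGrid_injective pairGrid_nestedRows
  rw [extraComponent_eq_comap]
  exact Ideal.comap_isPrime _ _

lemma eval_dropMixed (x : Fin 14 → ℂ) (f : MvPolynomial (Fin 14) ℂ) :
    eval x (dropMixed f) = eval (fun i => if 5 ≤ i ∧ i ≤ 8 then 0 else x i) f := by
  simp only [← aeval_eq_eval]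
  rw [dropMixed, ← AlgHom.comp_apply, comp_aeval]
  simp [apply_ite]

lemma mem_extraComponent_of_forall_eval_eq_zero {f : MvPolynomial (Fin 14) ℂ}
    (hf : ∀ (r : Fin 14 → ℂ) (c : Fin 2 → ℂ), (∀ a, r a ≠ 0) → (∀ b, c b ≠ 0) →
      eval (fun i => if 5 ≤ i ∧ i ≤ 8 then 0 else r (pairRow i) * c (pairCol i)) f = 0) :
    f ∈ extraComponent := by
  rw [extraComponent_eq_comap, Ideal.mem_comap]
  refine mem_gridIdeal_of_forall_eval_eq_zero pairGrid_injective pairGrid_nestedRows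
    fun r c hr hc => ?_
  rw [eval_dropMixed]
  exact hf r c hr hc

lemma nonPrimeInitial_le_extraComponent : nonPrimeInitial ≤ extraComponent := by
  rw [nonPrimeInitial, Ideal.span_le, extraComponent_eq_comap]
  rintro g (rfl | rfl | rfl | rfl | rfl | rfl | rfl | rfl | rfl | rfl) <;>
  simp [dropMixed, X_three_mul_sub_mem_gridIdeal_pair]

lemma notMem_extraComponent : X 1 * X 12 - X 0 * X 13 ∉ extraComponent := by
  have hle : extraComponent ≤
      RingHom.ker (eval fun i : Fin 14 => if i = 1 ∨ i = 12 then (1 : ℂ) else 0) := by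
    rw [extraComponent, Ideal.span_le]
    rintro g (rfl | rfl | rfl | rfl | rfl) <;> simp
  intro h
  simpa using hle h

lemma X_five_notMem_sup :
    X 5 ∉ nonPrimeInitial ⊔ Ideal.span {X 1 * X 12 - X 0 * X 13} := by
  have hle : nonPrimeInitial ⊔ Ideal.span {X 1 * X 12 - X 0 * X 13} ≤
      RingHom.ker (eval fun _ : Fin 14 => (1 : ℂ)) := by
    rw [nonPrimeInitial, ← Ideal.span_union, Ideal.span_le]
    rintro g ((rfl | rfl | rfl | rfl | rfl | rfl | rfl | rfl | rfl | rfl) | rfl) <;> simp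
  intro h
  simpa using hle h

lemma det_mul_mem {R : Type*} [CommRing R] {I : Ideal R} {a b c d x y : R}
    (h₁ : a * x - b * y ∈ I) (h₂ : y * c - x * d ∈ I) :
    (a * c - b * d) * x ∈ I ∧ (a * c - b * d) * y ∈ I := by
  constructor
  · rw [show (a * c - b * d) * x = c * (a * x - b * y) + b * (y * c - x * d) by ring]
    exact I.add_mem (I.mul_mem_left _ h₁) (I.mul_mem_left _ h₂)
  · rw [show (a * c - b * d) * y = d * (a * x - b * y) + a * (y * c - x * d) by ring]
    exact I.add_mem (I.mul_mem_left _ h₁) (I.mul_mem_left _ h₂)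

lemma span_mul_extraComponent_le :
    Ideal.span {X 1 * X 12 - X 0 * X 13} * extraComponent ≤ nonPrimeInitial := by
  have h₁ : X 1 * X 5 - X 0 * X 7 ∈ nonPrimeInitial := Ideal.subset_span (by simp)
  have h₂ : X 7 * X 12 - X 5 * X 13 ∈ nonPrimeInitial := Ideal.subset_span (by simp)
  have h₃ : X 1 * X 6 - X 0 * X 8 ∈ nonPrimeInitial := Ideal.subset_span (by simp)
  have h₄ : X 8 * X 12 - X 6 * X 13 ∈ nonPrimeInitial := Ideal.subset_span (by simp)
  have h₅ : X 3 * X 10 - X 2 * X 11 ∈ nonPrimeInitial := Ideal.subset_span (by simp)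
  rw [extraComponent, Ideal.span_mul_span', Ideal.span_le]
  rintro _ ⟨_, rfl, g, rfl | rfl | rfl | rfl | rfl, rfl⟩
  exacts [(det_mul_mem h₁ h₂).1, (det_mul_mem h₃ h₄).1, (det_mul_mem h₁ h₂).2,
    (det_mul_mem h₃ h₄).2, Ideal.mul_mem_left _ _ h₅]

lemma sup_span_singleton_inf_eq {R : Type*} [CommRing R] {J K : Ideal R} {q : R} [K.IsPrime]
    (hJK : J ≤ K) (hqK : q ∉ K) (hmul : Ideal.span {q} * K ≤ J) :
    (J ⊔ Ideal.span {q}) ⊓ K = J := by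
  refine le_antisymm ?_ (le_inf le_sup_left hJK)
  rintro f ⟨hfP, hfK⟩
  obtain ⟨j, hj, _, hc, rfl⟩ := Submodule.mem_sup.1 hfP
  obtain ⟨c, rfl⟩ := Ideal.mem_span_singleton'.1 hc
  have hcqK : c * q ∈ K := (Submodule.add_mem_iff_right K (hJK hj)).1 hfK
  have hcK : c ∈ K := (Ideal.IsPrime.mem_or_mem ‹_› hcqK).resolve_right hqK
  refine J.add_mem hj ?_
  rw [mul_comm]
  exact hmul (Ideal.mul_mem_mul (Ideal.mem_span_singleton_self q) hcK)

lemma nonPrimeInitial_eq_inf :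
    (nonPrimeInitial ⊔ Ideal.span {X 1 * X 12 - X 0 * X 13}) ⊓ extraComponent =
      nonPrimeInitial :=
  have := extraComponent_isPrime
  sup_span_singleton_inf_eq nonPrimeInitial_le_extraComponent notMem_extraComponent
    span_mul_extraComponent_le

lemma not_isPrime_nonPrimeInitial : ¬ nonPrimeInitial.IsPrime := by
  intro hprime
  have hmul : (X 1 * X 12 - X 0 * X 13) * X 5 ∈ nonPrimeInitial :=
    span_mul_extraComponent_le (Ideal.mul_mem_mul (Ideal.mem_span_singleton_self _)
      (Ideal.subset_span (by simp)))
  rcases hprime.mem_or_mem hmul with h | h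
  · exact notMem_extraComponent (nonPrimeInitial_le_extraComponent h)
  · exact X_five_notMem_sup (Ideal.mem_sup_left h)

/-! ### Initial forms and one-parameter degenerations -/

section InitialForms

variable {N : ℕ} {w : Fin N → ℝ}

lemma wt_eq_weight (w : Fin N → ℝ) (u : Fin N →₀ ℕ) : wt w u = Finsupp.weight w u := by
  simp [wt, Finsupp.weight_apply, Finsupp.sum_fintype, mul_comm]

lemma initialForm_eq_weightedHomogeneousComponent {f : MvPolynomial (Fin N) ℂ} {d : ℝ}
    (hle : ∀ u ∈ f.support, d ≤ Finsupp.weight w u)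
    (hd : ∃ u ∈ f.support, Finsupp.weight w u = d) :
    initialForm w f = weightedHomogeneousComponent w d f := by
  classical
  obtain ⟨u₀, hu₀, hu₀d⟩ := hd
  rw [initialForm, weightedHomogeneousComponent_apply, Finset.sum_filter]
  refine Finset.sum_congr rfl fun u hu => ?_
  simp only [wt_eq_weight]
  refine if_congr ⟨fun hmin => le_antisymm (hu₀d ▸ hmin u₀ hu₀) (hle u hu), ?_⟩ rfl rfl
  rintro rfl
  exact hle

lemma mem_initialIdeal_of_add_mem {I : Ideal (MvPolynomial (Fin N) ℂ)}
    {g h : MvPolynomial (Fin N) ℂ} {d e : ℝ} (hg : IsWeightedHomogeneous w g d)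
    (hh : IsWeightedHomogeneous w h e) (hde : d < e) (hI : g + h ∈ I) :
    g ∈ initialIdeal w I := by
  rcases eq_or_ne g 0 with rfl | hg0
  · exact Ideal.zero_mem _
  have hcomp : weightedHomogeneousComponent w d (g + h) = g := by
    rw [map_add, hg.weightedHomogeneousComponent_same,
      hh.weightedHomogeneousComponent_ne d hde.ne, add_zero]
  have hle : ∀ u ∈ (g + h).support, d ≤ Finsupp.weight w u := by
    intro u hu
    by_contra! hlt
    rw [mem_support_iff, coeff_add, hg.coeff_eq_zero u hlt.ne,
      hh.coeff_eq_zero u (hlt.trans hde).ne, add_zero] at hu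
    exact hu rfl
  obtain ⟨u, hu⟩ := ne_zero_iff.1 hg0
  have hud : Finsupp.weight w u = d := hg hu
  have huh : u ∈ (g + h).support := by
    rwa [mem_support_iff, coeff_add, hh.coeff_eq_zero u (hud ▸ hde.ne), add_zero]
  refine Ideal.subset_span ⟨g + h, hI, ne_zero_iff.2 ⟨u, mem_support_iff.1 huh⟩, ?_⟩
  rw [initialForm_eq_weightedHomogeneousComponent hle ⟨u, huh, hud⟩, hcomp]

lemma X_mul_X_sub_mem_initialIdeal {I : Ideal (MvPolynomial (Fin N) ℂ)} {a b c d e f : Fin N}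
    (s : ℂ) (hI : X a * X b - X c * X d + C s * (X e * X f) ∈ I)
    (hcd : w a + w b = w c + w d) (hef : w a + w b < w e + w f) :
    X a * X b - X c * X d ∈ initialIdeal w I := by
  have hmul (i j : Fin N) : IsWeightedHomogeneous w (X i * X j : MvPolynomial _ ℂ) (w i + w j) :=
    (isWeightedHomogeneous_X ℂ w i).mul (isWeightedHomogeneous_X ℂ w j)
  exact mem_initialIdeal_of_add_mem ((hmul a b).sub (hcd ▸ hmul c d)) ((hmul e f).C_mul s) hef hI

end InitialForms

section Degeneration

variable {σ R A : Type*} [CommRing R] [CommRing A] [Algebra R A] {n : σ → ℕ}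

lemma aeval_pow_mul_monomial (t : A) (y : σ → A) (u : σ →₀ ℕ) (a : R) :
    aeval (fun i => t ^ n i * y i) (monomial u a) =
      t ^ Finsupp.weight n u * aeval y (monomial u a) := by
  have hpow : u.prod (fun i k => (t ^ n i) ^ k) = t ^ Finsupp.weight n u := by
    simp only [Finsupp.weight_apply, Finsupp.sum, Finsupp.prod, ← pow_mul, smul_eq_mul, mul_comm,
      Finset.prod_pow_eq_pow_sum]
  simp only [aeval_monomial, mul_pow, Finsupp.prod_mul, hpow]
  ring

lemma pow_dvd_aeval_pow_mul {d : ℕ} {f : MvPolynomial σ R}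
    (hf : ∀ u ∈ f.support, d ≤ Finsupp.weight n u) (t : A) (y : σ → A) :
    t ^ d ∣ aeval (fun i => t ^ n i * y i) f := by
  rw [f.as_sum, map_sum]
  refine Finset.dvd_sum fun u hu => ?_
  rw [aeval_pow_mul_monomial]
  exact (pow_dvd_pow t (hf u hu)).mul_right _

lemma aeval_pow_mul_of_isWeightedHomogeneous {d : ℕ} {f : MvPolynomial σ R}
    (hf : IsWeightedHomogeneous n f d) (t : A) (y : σ → A) :
    aeval (fun i => t ^ n i * y i) f = t ^ d * aeval y f := by
  rw [f.as_sum, map_sum, map_sum, Finset.mul_sum]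
  refine Finset.sum_congr rfl fun u hu => ?_
  rw [aeval_pow_mul_monomial, hf (mem_support_iff.1 hu)]

lemma eval_weightedHomogeneousComponent_eq_zero [IsDomain R] {d : ℕ} {f : MvPolynomial σ R}
    (hle : ∀ u ∈ f.support, d ≤ Finsupp.weight n u) {y : σ → Polynomial R}
    (hf : aeval (fun i => Polynomial.X ^ n i * y i) f = 0) :
    eval (fun i => (y i).eval 0) (weightedHomogeneousComponent n d f) = 0 := by
  classical
  set g := weightedHomogeneousComponent n d f with hg
  have hrest : ∀ u ∈ (f - g).support, d + 1 ≤ Finsupp.weight n u := by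
    intro u hu
    rw [mem_support_iff, coeff_sub, hg, coeff_weightedHomogeneousComponent] at hu
    split_ifs at hu with hud
    · simp at hu
    · exact (hle u (by simpa using hu)).lt_of_ne' hud
  have hdvd : (Polynomial.X : Polynomial R) ^ d * Polynomial.X ∣ Polynomial.X ^ d * aeval y g := by
    have hhom : IsWeightedHomogeneous n g d :=
      weightedHomogeneousComponent_isWeightedHomogeneous d f
    rw [← pow_succ, ← dvd_neg, ← aeval_pow_mul_of_isWeightedHomogeneous hhom, ← zero_sub, ← hf,
      ← map_sub]
    exact pow_dvd_aeval_pow_mul hrest _ _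
  have hX : Polynomial.X ∣ aeval y g :=
    (mul_dvd_mul_iff_left (pow_ne_zero d Polynomial.X_ne_zero)).1 hdvd
  have heval : eval (fun i => (y i).eval 0) g = (aeval y g).eval 0 := by
    rw [aeval_def, polynomial_eval_eval₂, eval, coe_eval₂Hom]
    congr 1
    ext
    simp
  rw [heval, ← Polynomial.coeff_zero_eq_eval_zero, Polynomial.X_dvd_iff.1 hX]

lemma eval_initialForm_eq_zero {N : ℕ} {n : Fin N → ℕ} {y : Fin N → Polynomial ℂ}
    {f : MvPolynomial (Fin N) ℂ} (hf : aeval (fun i => Polynomial.X ^ n i * y i) f = 0) :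
    eval (fun i => (y i).eval 0) (initialForm (fun i => (n i : ℝ)) f) = 0 := by
  rcases f.support.eq_empty_or_nonempty with hf0 | hne
  · simp [initialForm, hf0]
  obtain ⟨u₀, hu₀, hmin⟩ := f.support.exists_min_image (Finsupp.weight n) hne
  have hcast (u : Fin N →₀ ℕ) :
      Finsupp.weight (fun i => (n i : ℝ)) u = (Finsupp.weight n u : ℝ) := by
    simp [Finsupp.weight_apply, Finsupp.sum]
  have hcomp : initialForm (fun i => (n i : ℝ)) f =
      weightedHomogeneousComponent n (Finsupp.weight n u₀) f := by
    rw [initialForm_eq_weightedHomogeneousComponent (d := (Finsupp.weight n u₀ : ℝ))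
      (fun u hu => by rw [hcast]; exact_mod_cast hmin u hu) ⟨u₀, hu₀, hcast u₀⟩]
    classical
    ext u
    simp only [coeff_weightedHomogeneousComponent, hcast, Nat.cast_inj]
  rw [hcomp]
  exact eval_weightedHomogeneousComponent_eq_zero hmin hf

end Degeneration

/-! ### Flags in coordinates -/

section FlagMinors

variable {A : Type*} [CommRing A]

/-- The Plücker coordinates of the flag spanned by the rows of `x`, ordered as in `subsets4`. -/
def flagMinors (x : Matrix (Fin 3) (Fin 4) A) (i : Fin 14) : A :=
  (x.submatrix (Fin.castLE (subsets4_card i)) ((subsets4 i).orderEmbOfFin rfl)).det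

lemma mem_I4_iff {f : MvPolynomial (Fin 14) ℂ} :
    f ∈ I4 ↔ aeval (flagMinors (Matrix.mvPolynomialX (Fin 3) (Fin 4) ℂ)) f = 0 := Iff.rfl

lemma map_flagMinors {B : Type*} [CommRing B] (φ : A →+* B) (x : Matrix (Fin 3) (Fin 4) A)
    (i : Fin 14) : φ (flagMinors x i) = flagMinors (x.map φ) i := by
  rw [flagMinors, RingHom.map_det]
  rfl

lemma aeval_flagMinors_eq_zero [Algebra ℂ A] {f : MvPolynomial (Fin 14) ℂ} (hf : f ∈ I4)
    (x : Matrix (Fin 3) (Fin 4) A) : aeval (flagMinors x) f = 0 := by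
  have hx : flagMinors x = fun i => aeval (fun p : Fin 3 × Fin 4 => x p.1 p.2)
      (flagMinors (Matrix.mvPolynomialX (Fin 3) (Fin 4) ℂ) i) := by
    funext i
    rw [← RingHom.coe_coe, map_flagMinors]
    congr 1
    ext a b
    simp
  rw [hx, ← comp_aeval, AlgHom.comp_apply, mem_I4_iff.1 hf, map_zero]

lemma flagMinors_eq_det {k : ℕ} (x : Matrix (Fin 3) (Fin 4) A) (i : Fin 14) (hk : k ≤ 3)
    (hi : (subsets4 i).card = k) {f : Fin k → Fin 4} (hf : StrictMono f)
    (hmem : ∀ a, f a ∈ subsets4 i) :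
    flagMinors x i = (x.submatrix (Fin.castLE hk) f).det := by
  subst hi
  rw [Finset.orderEmbOfFin_unique rfl hmem hf, flagMinors]

/-- The `2 × 2` minor of the first two rows of `x` in the columns `a`, `b`. -/
def minorTwo (x : Matrix (Fin 3) (Fin 4) A) (a b : Fin 4) : A := x 0 a * x 1 b - x 0 b * x 1 a

/-- The `3 × 3` minor of `x` in the columns `a`, `b`, `c`, expanded along the last row. -/
def minorThree (x : Matrix (Fin 3) (Fin 4) A) (a b c : Fin 4) : A :=
  minorTwo x a b * x 2 c - minorTwo x a c * x 2 b + minorTwo x b c * x 2 a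

lemma flagMinors_eq_entry (x : Matrix (Fin 3) (Fin 4) A) {i : Fin 14} {a : Fin 4}
    (hi : subsets4 i = {a}) : flagMinors x i = x 0 a := by
  rw [flagMinors_eq_det x i (k := 1) (f := ![a]) (by decide) (by simp [hi])
    (Subsingleton.strictMono _) (by simp [hi]), Matrix.det_fin_one]
  rfl

lemma flagMinors_eq_minorTwo (x : Matrix (Fin 3) (Fin 4) A) {i : Fin 14} {a b : Fin 4}
    (hab : a < b) (hi : subsets4 i = {a, b}) : flagMinors x i = minorTwo x a b := by
  rw [flagMinors_eq_det x i (k := 2) (f := ![a, b]) (by decide)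
    (by rw [hi, Finset.card_pair hab.ne]) (by simpa [Fin.strictMono_iff_lt_succ] using hab)
    (by simp [hi, Fin.forall_fin_two]), Matrix.det_fin_two]
  rfl

lemma flagMinors_eq_minorThree (x : Matrix (Fin 3) (Fin 4) A) {i : Fin 14} {a b c : Fin 4}
    (hab : a < b) (hbc : b < c) (hi : subsets4 i = {a, b, c}) :
    flagMinors x i = minorThree x a b c := by
  have hcard : (subsets4 i).card = 3 :=
    Finset.card_eq_three.2 ⟨a, b, c, hab.ne, (hab.trans hbc).ne, hbc.ne, hi⟩
  rw [flagMinors_eq_det x i (f := ![a, b, c]) le_rfl hcard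
    (by simp [Fin.strictMono_iff_lt_succ, Fin.forall_fin_two, hab, hbc])
    (by simp [hi, Fin.forall_fin_succ]), Matrix.det_fin_three]
  simp [minorThree, minorTwo]
  ring

lemma flagMinors_eq (x : Matrix (Fin 3) (Fin 4) A) :
    flagMinors x = ![x 0 0, x 0 1, x 0 2, x 0 3, minorTwo x 0 1, minorTwo x 0 2, minorTwo x 0 3,
      minorTwo x 1 2, minorTwo x 1 3, minorTwo x 2 3, minorThree x 0 1 2, minorThree x 0 1 3,
      minorThree x 0 2 3, minorThree x 1 2 3] := by
  funext i
  fin_cases i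
  iterate 4 exact flagMinors_eq_entry x rfl
  iterate 6 exact flagMinors_eq_minorTwo x (by decide) rfl
  iterate 4 exact flagMinors_eq_minorThree x (by decide) (by decide) rfl

end FlagMinors

/-- An integral weight vector in the cone of `nonPrimeInitial`. -/
def coneWeight : Fin 14 → ℕ := ![0, 0, 0, 0, 1, 0, 0, 0, 0, 2, 1, 1, 2, 2]

lemma four_term_relation_mem_I4 :
    X 3 * X 10 - X 2 * X 11 + (X 1 * X 12 - X 0 * X 13) ∈ I4 := by
  rw [mem_I4_iff, flagMinors_eq]
  simp [minorTwo, minorThree]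
  ring

lemma four_term_mem_initialIdeal :
    X 3 * X 10 - X 2 * X 11 ∈ initialIdeal (fun i => (coneWeight i : ℝ)) I4 := by
  have hX (i j : Fin 14) := (isWeightedHomogeneous_X ℂ (fun i => (coneWeight i : ℝ)) i).mul
    (isWeightedHomogeneous_X ℂ (fun i => (coneWeight i : ℝ)) j)
  refine mem_initialIdeal_of_add_mem (d := 1) (e := 2) (.sub ?_ ?_) (.sub ?_ ?_) (by norm_num)
    four_term_relation_mem_I4
  · simpa [coneWeight] using hX 3 10
  · simpa [coneWeight] using hX 2 11
  · simpa [coneWeight] using hX 1 12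
  · simpa [coneWeight] using hX 0 13

lemma three_term_mem_initialIdeal {a b c d : Fin 14} (e f : Fin 14) (s : ℂ)
    (hcd : coneWeight a + coneWeight b = coneWeight c + coneWeight d)
    (hef : coneWeight a + coneWeight b < coneWeight e + coneWeight f)
    (hI : X a * X b - X c * X d + C s * (X e * X f) ∈ I4) :
    X a * X b - X c * X d ∈ initialIdeal (fun i => (coneWeight i : ℝ)) I4 :=
  X_mul_X_sub_mem_initialIdeal s hI (by exact_mod_cast hcd) (by exact_mod_cast hef)

lemma nonPrimeInitial_le_initialIdeal :
    nonPrimeInitial ≤ initialIdeal (fun i => (coneWeight i : ℝ)) I4 := by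
  rw [nonPrimeInitial, Ideal.span_le]
  rintro g (rfl | rfl | rfl | rfl | rfl | rfl | rfl | rfl | rfl | rfl)
  · exact four_term_mem_initialIdeal
  on_goal 1 => refine three_term_mem_initialIdeal 9 11 (-1) (by decide) (by decide) ?_
  on_goal 2 => refine three_term_mem_initialIdeal 9 10 (-1) (by decide) (by decide) ?_
  on_goal 3 => refine three_term_mem_initialIdeal 3 4 (-1) (by decide) (by decide) ?_
  on_goal 4 => refine three_term_mem_initialIdeal 2 4 (-1) (by decide) (by decide) ?_
  on_goal 5 => refine three_term_mem_initialIdeal 4 13 1 (by decide) (by decide) ?_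
  on_goal 6 => refine three_term_mem_initialIdeal 4 12 1 (by decide) (by decide) ?_
  on_goal 7 => refine three_term_mem_initialIdeal 1 9 1 (by decide) (by decide) ?_
  on_goal 8 => refine three_term_mem_initialIdeal 0 9 1 (by decide) (by decide) ?_
  on_goal 9 => refine three_term_mem_initialIdeal 4 9 1 (by decide) (by decide) ?_
  all_goals
    rw [mem_I4_iff, flagMinors_eq]
    simp [minorTwo, minorThree]
    ring

section Limits

variable {A : Type*} [CommRing A]

lemma eval_initialForm_eq_zero_of_mem_I4 {n : Fin 14 → ℕ}
    {x : Matrix (Fin 3) (Fin 4) (Polynomial ℂ)} {y : Fin 14 → Polynomial ℂ}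
    (hx : flagMinors x = fun i => Polynomial.X ^ n i * y i) {f : MvPolynomial (Fin 14) ℂ}
    (hf : f ∈ I4) :
    eval (fun i => (y i).eval 0) (initialForm (fun i => (n i : ℝ)) f) = 0 :=
  eval_initialForm_eq_zero (hx ▸ aeval_flagMinors_eq_zero hf x)

/-- A family of flags whose Plücker coordinates, rescaled by `t ^ coneWeight`, tend for `t → 0`
to points of the torus orbit parametrised by `crossRow` and `crossCol`. -/
def crossFlag (t u₁ u₂ v₃ v₄ a z y b d : A) : Matrix (Fin 3) (Fin 4) A :=
  !![u₁, u₂ + t * (a * z), a * v₃, a * v₄ - t ^ 2 * y;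
    0, t * z, v₃, v₄;
    0, -(t * b), 0, t ^ 2 * d]

lemma flagMinors_crossFlag (t u₁ u₂ v₃ v₄ a z y b d : A) :
    flagMinors (crossFlag t u₁ u₂ v₃ v₄ a z y b d) = fun i => t ^ coneWeight i *
      ![u₁, u₂ + t * (a * z), a * v₃, a * v₄ - t ^ 2 * y, u₁ * z, u₁ * v₃, u₁ * v₄, u₂ * v₃,
        u₂ * v₄ + t ^ 3 * (y * z), y * v₃, b * u₁ * v₃, b * u₁ * v₄ + t ^ 2 * (u₁ * z * d),
        d * u₁ * v₃, d * u₂ * v₃ - t * (y * v₃ * b)] i := by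
  rw [flagMinors_eq]
  funext i
  fin_cases i <;> simp [crossFlag, minorTwo, minorThree, coneWeight] <;> ring

lemma eval_initialForm_eq_zero_of_crossFlag {f : MvPolynomial (Fin 14) ℂ} (hf : f ∈ I4)
    (u₁ u₂ v₃ v₄ a z y b d : ℂ) :
    eval ![u₁, u₂, a * v₃, a * v₄, u₁ * z, u₁ * v₃, u₁ * v₄, u₂ * v₃, u₂ * v₄, y * v₃,
        b * u₁ * v₃, b * u₁ * v₄, d * u₁ * v₃, d * u₂ * v₃]
      (initialForm (fun i => (coneWeight i : ℝ)) f) = 0 := by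
  convert eval_initialForm_eq_zero_of_mem_I4 (flagMinors_crossFlag Polynomial.X (.C u₁) (.C u₂)
    (.C v₃) (.C v₄) (.C a) (.C z) (.C y) (.C b) (.C d)) hf using 3
  funext i
  fin_cases i <;> simp

/-- A family of flags whose Plücker coordinates, rescaled by `t ^ coneWeight`, tend for `t → 0`
to points of `V(extraComponent)`. -/
def pairFlag (t a b v₃ v₄ b₁ b₂ m c₁ c₂ : A) : Matrix (Fin 3) (Fin 4) A :=
  !![a, b, v₃, v₄;
    t * b₁, t * b₂, 0, t ^ 2 * m;
    c₁, c₂, 0, 0]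

lemma flagMinors_pairFlag (t a b v₃ v₄ b₁ b₂ m c₁ c₂ : A) :
    flagMinors (pairFlag t a b v₃ v₄ b₁ b₂ m c₁ c₂) = fun i => t ^ coneWeight i *
      ![a, b, v₃, v₄, a * b₂ - b * b₁, -(t * (v₃ * b₁)), t ^ 2 * (a * m) - t * (v₄ * b₁),
        -(t * (v₃ * b₂)), t ^ 2 * (b * m) - t * (v₄ * b₂), v₃ * m, v₃ * (b₁ * c₂ - b₂ * c₁),
        v₄ * (b₁ * c₂ - b₂ * c₁) + t * (m * (b * c₁ - a * c₂)), v₃ * m * c₁, v₃ * m * c₂] i := by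
  rw [flagMinors_eq]
  funext i
  fin_cases i <;> simp [pairFlag, minorTwo, minorThree, coneWeight] <;> ring

lemma eval_initialForm_eq_zero_of_pairFlag {f : MvPolynomial (Fin 14) ℂ} (hf : f ∈ I4)
    (a b v₃ v₄ b₁ b₂ m c₁ c₂ : ℂ) :
    eval ![a, b, v₃, v₄, a * b₂ - b * b₁, 0, 0, 0, 0, v₃ * m, v₃ * (b₁ * c₂ - b₂ * c₁),
        v₄ * (b₁ * c₂ - b₂ * c₁), v₃ * m * c₁, v₃ * m * c₂]
      (initialForm (fun i => (coneWeight i : ℝ)) f) = 0 := by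
  convert eval_initialForm_eq_zero_of_mem_I4 (flagMinors_pairFlag Polynomial.X (.C a) (.C b)
    (.C v₃) (.C v₄) (.C b₁) (.C b₂) (.C m) (.C c₁) (.C c₂)) hf using 3
  funext i
  fin_cases i <;> simp

end Limits

lemma initialForm_mem_sup {f : MvPolynomial (Fin 14) ℂ} (hf : f ∈ I4) :
    initialForm (fun i => (coneWeight i : ℝ)) f ∈
      nonPrimeInitial ⊔ Ideal.span {X 1 * X 12 - X 0 * X 13} := by
  rw [sup_span_singleton_eq_gridIdeal]
  refine mem_gridIdeal_of_forall_eval_eq_zero crossGrid_injective crossGrid_nestedRows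
    fun r c hr hc => ?_
  have hlimit := eval_initialForm_eq_zero_of_crossFlag hf (r 3 * c 1) (r 3 * c 2) (r 2 / r 3)
    (r 1 / r 3) (c 0 * r 3) (r 4 * c 0 / (r 3 * c 1)) (r 5 * c 0 * r 3 / r 2) (c 3 / c 1)
    (r 0 / r 2)
  have hr2 := hr 2
  have hr3 := hr 3
  have hc1 := hc 1
  refine Eq.trans ?_ hlimit
  congr 2
  funext i
  fin_cases i <;> simp [crossRow, crossCol] <;> field_simp

lemma exists_linear_system_solution {K : Type*} [Field K] {a b c d : K} (h : a * d - b * c ≠ 0)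
    (s t : K) : ∃ x y, a * x + b * y = s ∧ c * x + d * y = t := by
  have hinv := mul_inv_cancel₀ h
  exact ⟨(s * d - b * t) * (a * d - b * c)⁻¹, (a * t - s * c) * (a * d - b * c)⁻¹,
    by linear_combination s * hinv, by linear_combination t * hinv⟩

lemma mul_initialForm_mem_extraComponent {f : MvPolynomial (Fin 14) ℂ} (hf : f ∈ I4) :
    (X 1 * X 12 - X 0 * X 13) * initialForm (fun i => (coneWeight i : ℝ)) f ∈ extraComponent := by
  refine mem_extraComponent_of_forall_eval_eq_zero fun r c hr hc => ?_
  rw [map_mul, mul_eq_zero, or_iff_not_imp_left]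
  -- Where the binomial does not vanish, it is the determinant of the linear system for the
  -- entries `b₁`, `b₂` of `pairFlag`.
  intro hq
  have hdet : -r 1 * -r 12 - r 0 * r 13 ≠ 0 := by
    contrapose! hq
    simp only [map_sub, map_mul, eval_X, pairRow, pairCol]
    simp
    linear_combination c 0 ^ 2 * hq
  obtain ⟨b₁, b₂, hb₄, hb₁₀⟩ := exists_linear_system_solution hdet (r 4) (r 10 * r 9 / r 2)
  have hr2 := hr 2
  have hr9 := hr 9
  have hc1 := hc 1
  have hlimit := eval_initialForm_eq_zero_of_pairFlag hf (r 0 * c 0) (r 1 * c 0) (r 2 * c 1)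
    (r 2 * c 0) b₁ b₂ (r 9 * c 0 / (r 2 * c 1)) (r 12 / r 9) (r 13 / r 9)
  refine Eq.trans ?_ hlimit
  congr 2
  funext i
  fin_cases i <;> simp [pairRow, pairCol]
  · linear_combination -c 0 * hb₄
  · field_simp
  · field_simp at hb₁₀ ⊢
    linear_combination -hb₁₀
  · field_simp at hb₁₀ ⊢
    linear_combination -c 0 * hb₁₀
  · field_simp
  · field_simp

lemma initialForm_mem_extraComponent {f : MvPolynomial (Fin 14) ℂ} (hf : f ∈ I4) :
    initialForm (fun i => (coneWeight i : ℝ)) f ∈ extraComponent :=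
  (extraComponent_isPrime.mem_or_mem (mul_initialForm_mem_extraComponent hf)).resolve_left
    notMem_extraComponent

lemma initialIdeal_I4_eq :
    initialIdeal (fun i => (coneWeight i : ℝ)) I4 = nonPrimeInitial := by
  refine le_antisymm ?_ nonPrimeInitial_le_initialIdeal
  rw [initialIdeal, Ideal.span_le, ← nonPrimeInitial_eq_inf]
  rintro _ ⟨f, hf, -, rfl⟩
  exact ⟨initialForm_mem_sup hf, initialForm_mem_extraComponent hf⟩

/-- The ideal generated by the ten listed binomials is the initial ideal of `I₄` for some
weight vector, is not prime, and becomes prime after adding the binomial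
`p₂p₁₃₄ − p₁p₂₃₄`. -/
theorem nonprime_cone_flag4 :
    (∃ w : Fin 14 → ℝ, initialIdeal w I4 = nonPrimeInitial) ∧
    ¬ nonPrimeInitial.IsPrime ∧
    (nonPrimeInitial ⊔ Ideal.span {X 1 * X 12 - X 0 * X 13}).IsPrime := by
  refine ⟨⟨fun i => coneWeight i, initialIdeal_I4_eq⟩, not_isPrime_nonPrimeInitial, ?_⟩
  rw [sup_span_singleton_eq_gridIdeal]
  exact gridIdeal_isPrime crossGrid_injective crossGrid_nestedRows
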